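/- Let μ be a finite Borel measure on ℝⁿ such that for every integer m ≥ 1 and every coordinate index 1 ≤ j ≤ n the absolute moment S_j(m) = ∫_{ℝⁿ} |λ_j|ᵐ dμ(λ) is finite. Suppose that for every j ∈ {1, …, n} the even moments satisfy Carleman's condition ∑_{m=1}^∞ S_j(2m)^{-1/(2m)} = ∞. Then the set of (complex-valued) polynomial functions on ℝⁿ is dense in L¹(ℝⁿ, μ). -/

import Mathlib

open MeasureTheory

lemma carleman_ineq (a : ℕ → ℝ) (ha : ∀ i, 0 < a i) (hs : Summable a) :
    Summable (fun m : ℕ => (∏ i ∈ Finset.range (m+1), a i) ^ (1 / ((m:ℝ)+1))) := by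
  set T : ℕ → ℝ := fun K => ∑ i ∈ Finset.range K, ((i:ℝ)+1) * a i with hT
  have hT0 : ∀ K, 0 ≤ T K := fun K => Finset.sum_nonneg fun i _ => by
    have := ha i; positivity
  have key : ∀ K : ℕ, ∑ m ∈ Finset.range K, T (m+1) / ((m:ℝ)+1)^2 + T K / ((K:ℝ)+1/2)
      ≤ 2 * ∑ i ∈ Finset.range K, a i := by
    intro K
    induction K with
    | zero => simp [hT]
    | succ K ih =>
      rw [Finset.sum_range_succ, Finset.sum_range_succ _ K]
      have e1 : T K = T (K+1) - ((K:ℝ)+1) * a K := by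
        simp [hT, Finset.sum_range_succ]
      have h1 : T (K+1) / ((K:ℝ)+1)^2 ≤ T (K+1) / ((K:ℝ)+1/2) - T (K+1) / (((K+1:ℕ):ℝ)+1/2) := by
        have h := hT0 (K+1)
        have : 1 / ((K:ℝ)+1)^2 ≤ 1 / ((K:ℝ)+1/2) - 1 / (((K+1:ℕ):ℝ)+1/2) := by
          push_cast
          rw [div_sub_div _ _ (by positivity) (by positivity),
            div_le_div_iff₀ (by positivity) (by positivity)]
          nlinarith
        calc _ = T (K+1) * (1 / ((K:ℝ)+1)^2) := by ring
          _ ≤ T (K+1) * (1 / ((K:ℝ)+1/2) - 1 / (((K+1:ℕ):ℝ)+1/2)) :=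
              mul_le_mul_of_nonneg_left this h
          _ = _ := by ring
      have h2 : ((K:ℝ)+1) * a K / ((K:ℝ)+1/2) ≤ 2 * a K := by
        rw [div_le_iff₀ (by positivity)]
        have := ha K
        nlinarith [mul_nonneg (Nat.cast_nonneg (α := ℝ) K) this.le]
      rw [e1, sub_div] at ih
      linarith
  have bd : ∀ m : ℕ, (∏ i ∈ Finset.range (m+1), a i) ^ (1 / ((m:ℝ)+1))
      ≤ Real.exp 1 * (T (m+1) / ((m:ℝ)+1)^2) := by
    intro m
    have hm : (0:ℝ) < (m:ℝ)+1 := by positivity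
    have amgm := Real.geom_mean_le_arith_mean_weighted (Finset.range (m+1))
      (fun _ => 1/((m:ℝ)+1)) (fun i => ((i:ℝ)+1) * a i) (fun _ _ => by positivity)
      (by simp; field_simp) (fun i _ => by have := ha i; positivity)
    rw [Real.finsetProd_rpow _ _ (fun i _ => by have := ha i; positivity),
      Finset.prod_mul_distrib, ← Finset.mul_sum] at amgm
    have hfac : ∏ i ∈ Finset.range (m+1), ((i:ℝ)+1) = ((m+1).factorial : ℝ) := by
      rw [← Finset.prod_range_add_one_eq_factorial]; push_cast; rfl
    rw [hfac, Real.mul_rpow (by positivity) (Finset.prod_nonneg fun i _ => (ha i).le)] at amgm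
    have st : ((m:ℝ)+1) / Real.exp 1 ≤ ((m+1).factorial : ℝ) ^ (1/((m:ℝ)+1)) := by
      have h := Real.pow_div_factorial_le_exp ((m:ℝ)+1) hm.le (m+1)
      have h2 : (((m:ℝ)+1) / Real.exp 1)^(m+1) ≤ ((m+1).factorial : ℝ) := by
        rw [div_pow, ← Real.exp_nat_mul]
        rw [div_le_iff₀ (by positivity)] at h ⊢
        push_cast; rw [mul_one]; linarith
      calc ((m:ℝ)+1) / Real.exp 1 = ((((m:ℝ)+1) / Real.exp 1)^(m+1)) ^ (1/((m:ℝ)+1)) := by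
            rw [← Real.rpow_natCast, ← Real.rpow_mul (by positivity)]
            push_cast
            rw [mul_one_div_cancel hm.ne', Real.rpow_one]
        _ ≤ _ := Real.rpow_le_rpow (by positivity) h2 (by positivity)
    set G := (∏ i ∈ Finset.range (m+1), a i) ^ (1 / ((m:ℝ)+1))
    have hG : 0 ≤ G := Real.rpow_nonneg (Finset.prod_nonneg fun i _ => (ha i).le) _
    have h3 : ((m:ℝ)+1) / Real.exp 1 * G ≤ 1/((m:ℝ)+1) * T (m+1) :=
      (mul_le_mul_of_nonneg_right st hG).trans amgm
    calc G = Real.exp 1 / ((m:ℝ)+1) * (((m:ℝ)+1) / Real.exp 1 * G) := by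
          field_simp
      _ ≤ Real.exp 1 / ((m:ℝ)+1) * (1/((m:ℝ)+1) * T (m+1)) := by gcongr
      _ = _ := by field_simp
  refine summable_of_sum_range_le (c := Real.exp 1 * (2 * ∑' i, a i))
    (fun m => Real.rpow_nonneg (Finset.prod_nonneg fun i _ => (ha i).le) _) fun K => ?_
  calc _ ≤ ∑ m ∈ Finset.range K, Real.exp 1 * (T (m+1) / ((m:ℝ)+1)^2) :=
        Finset.sum_le_sum fun m _ => bd m
    _ = Real.exp 1 * ∑ m ∈ Finset.range K, (T (m+1) / ((m:ℝ)+1)^2) := by rw [Finset.mul_sum]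
    _ ≤ _ := by
      gcongr
      have h1 := key K
      have h2 : 0 ≤ T K / ((K:ℝ)+1/2) := div_nonneg (hT0 K) (by positivity)
      have h3 := hs.sum_le_tsum (Finset.range K) (fun i _ => (ha i).le)
      linarith

lemma ratio_not_summable (M : ℕ → ℝ) (hM : ∀ k, 0 < M k)
    (hdiv : ¬ Summable (fun m : ℕ => (M (m+1)) ^ (-(1 / ((m:ℝ)+1))))) :
    ¬ Summable (fun k => M k / M (k+1)) := by
  intro hs
  apply hdiv
  have h := carleman_ineq _ (fun k => div_pos (hM k) (hM (k+1))) hs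
  have hp : ∀ m, ∏ i ∈ Finset.range (m+1), (M i / M (i+1)) = M 0 / M (m+1) := by
    intro m
    induction m with
    | zero => simp
    | succ m ih =>
      rw [Finset.prod_range_succ, ih]
      exact div_mul_div_cancel₀ (hM (m+1)).ne'
  refine Summable.of_nonneg_of_le (fun m => Real.rpow_nonneg (hM _).le _) (fun m => ?_)
    (h.mul_left (max 1 (M 0)⁻¹))
  rw [hp, Real.div_rpow (hM 0).le (hM _).le, Real.rpow_neg (hM _).le]
  have h1 : (M 0)⁻¹ ^ (1/((m:ℝ)+1)) ≤ max 1 (M 0)⁻¹ := by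
    calc (M 0)⁻¹ ^ (1/((m:ℝ)+1)) ≤ (max 1 (M 0)⁻¹) ^ (1/((m:ℝ)+1)) :=
          Real.rpow_le_rpow (inv_nonneg.2 (hM 0).le) (le_max_right _ _) (by positivity)
      _ ≤ (max 1 (M 0)⁻¹) ^ (1:ℝ) := Real.rpow_le_rpow_of_exponent_le (le_max_left _ _) (by
          rw [div_le_one (by positivity)]; linarith [Nat.cast_nonneg (α := ℝ) m])
      _ = _ := Real.rpow_one _
  rw [Real.inv_rpow (hM 0).le] at h1
  have p0 : 0 < M 0 ^ (1/((m:ℝ)+1)) := Real.rpow_pos_of_pos (hM 0) _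
  have p1 : 0 < M (m+1) ^ (1/((m:ℝ)+1)) := Real.rpow_pos_of_pos (hM _) _
  calc (M (m+1) ^ (1/((m:ℝ)+1)))⁻¹
      = (M 0 ^ (1/((m:ℝ)+1)))⁻¹ * (M 0 ^ (1/((m:ℝ)+1)) / M (m+1) ^ (1/((m:ℝ)+1))) := by
        field_simp
    _ ≤ _ := by gcongr

lemma bang_step (D : ℕ → ℝ → ℝ) (M : ℕ → ℝ) (C : ℝ) (hC : 0 ≤ C) (hM : ∀ k, 0 < M k)
    (hlc : Monotone (fun k => M (k+1) / M k))
    (hb : ∀ k x, D k x ≤ C * M k)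
    (ht : ∀ k r x h, D k (x+h) ≤ ∑ j ∈ Finset.range r, |h|^j / (j.factorial : ℝ) * D (k+j) x
      + |h|^r / (r.factorial : ℝ) * (C * M (k+r)))
    (N : ℕ) (x h : ℝ)
    (hx : ∀ k, D k x ≤ C * Real.exp (-((N:ℝ)+1)) * Real.exp k * M k)
    (hh : |h| ≤ Real.exp (-1) * (M N / M (N+1))) (k : ℕ) :
    D k (x+h) ≤ C * Real.exp (-(N:ℝ)) * Real.exp k * M k := by
  rcases le_or_gt N k with hk | hk
  · refine (hb k _).trans ?_
    have h1 : (1:ℝ) ≤ Real.exp (-(N:ℝ)) * Real.exp k := by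
      rw [← Real.exp_add]
      apply Real.one_le_exp
      have : (N:ℝ) ≤ k := by exact_mod_cast hk
      linarith
    have h2 : 0 ≤ C * M k := mul_nonneg hC (hM k).le
    nlinarith
  · set q := M (N+1) / M N with hq
    have hq0 : 0 < q := div_pos (hM _) (hM _)
    have hgrow : ∀ j, k + j ≤ N + 1 → M (k+j) ≤ M k * q^j := by
      intro j
      induction j with
      | zero => simp
      | succ j ih =>
        intro hj
        have h1 := ih (by omega)
        have h2 : M (k+j+1) / M (k+j) ≤ q := hlc (show k+j ≤ N by omega)
        rw [div_le_iff₀ (hM _)] at h2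
        calc M (k+j+1) ≤ q * M (k+j) := h2
          _ ≤ q * (M k * q^j) := by gcongr
          _ = _ := by ring
    obtain ⟨r, hr⟩ : ∃ r, k + r = N + 1 := ⟨N+1-k, by omega⟩
    set y := Real.exp 1 * |h| * q with hy
    have hy0 : 0 ≤ y := by positivity
    have hy1 : y ≤ 1 := by
      calc y ≤ Real.exp 1 * (Real.exp (-1) * (M N / M (N+1))) * q :=
            mul_le_mul_of_nonneg_right (mul_le_mul_of_nonneg_left hh (Real.exp_pos 1).le) hq0.le
        _ = (Real.exp 1 * Real.exp (-1)) * ((M N / M (N+1)) * (M (N+1) / M N)) := by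
            rw [hq]; ring
        _ = 1 := by
          rw [← Real.exp_add]
          have := hM N; have := hM (N+1)
          field_simp; simp
    set A := C * Real.exp (-((N:ℝ)+1)) * Real.exp k * M k with hA
    have hA0 : 0 ≤ A := by have := hM k; positivity
    have hterm : ∀ j ∈ Finset.range r, |h|^j / (j.factorial : ℝ) * D (k+j) x
        ≤ A * (y^j / (j.factorial : ℝ)) := by
      intro j hj
      have hj' := Finset.mem_range.1 hj
      calc |h|^j / (j.factorial : ℝ) * D (k+j) x
          ≤ |h|^j / (j.factorial : ℝ) *
            (C * Real.exp (-((N:ℝ)+1)) * Real.exp ((k+j : ℕ):ℝ) * (M k * q^j)) := by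
            gcongr
            refine (hx (k+j)).trans ?_
            gcongr
            exact hgrow j (by omega)
        _ = _ := by
          have : Real.exp (j:ℝ) = Real.exp 1 ^ j := by rw [← Real.exp_nat_mul, mul_one]
          push_cast; rw [Real.exp_add, this, hA, hy]; ring
    have hlast : |h|^r / (r.factorial : ℝ) * (C * M (k+r)) ≤ A * (y^r / (r.factorial : ℝ)) := by
      calc _ ≤ |h|^r / (r.factorial : ℝ) * (C * (M k * q^r)) := by
            gcongr; exact hgrow r hr.le
        _ = |h|^r / (r.factorial : ℝ) * (C * (M k * q^r)) *
            (Real.exp (-((N:ℝ)+1)) * Real.exp k * Real.exp r) := by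
            have : (k:ℝ) + r = N + 1 := by exact_mod_cast hr
            rw [← Real.exp_add, ← Real.exp_add, show -((N:ℝ)+1) + k + r = 0 by linarith]; simp
        _ = _ := by
          have : Real.exp (r:ℝ) = Real.exp 1 ^ r := by rw [← Real.exp_nat_mul, mul_one]
          rw [this, hA, hy]; ring
    calc D k (x+h) ≤ _ := ht k r x h
      _ ≤ ∑ j ∈ Finset.range r, A * (y^j / (j.factorial : ℝ)) + A * (y^r / (r.factorial : ℝ)) :=
        add_le_add (Finset.sum_le_sum hterm) hlast
      _ = A * ∑ j ∈ Finset.range (r+1), y^j / (j.factorial : ℝ) := by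
        rw [← Finset.sum_range_succ (fun j => A * (y^j / (j.factorial : ℝ))), Finset.mul_sum]
      _ ≤ A * Real.exp y := by gcongr; exact Real.sum_le_exp_of_nonneg hy0 _
      _ ≤ A * Real.exp 1 := by gcongr
      _ = _ := by
        rw [hA, show -(N:ℝ) = -((N:ℝ)+1) + 1 by ring, Real.exp_add (-((N:ℝ)+1))]; ring

lemma bang (D : ℕ → ℝ → ℝ) (M : ℕ → ℝ) (C : ℝ) (hC : 0 ≤ C) (hM : ∀ k, 0 < M k)
    (hlc : ∀ k, M (k+1) ^ 2 ≤ M k * M (k+2))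
    (hb : ∀ k x, D k x ≤ C * M k)
    (ht : ∀ k r x h, D k (x+h) ≤ ∑ j ∈ Finset.range r, |h|^j / (j.factorial : ℝ) * D (k+j) x
      + |h|^r / (r.factorial : ℝ) * (C * M (k+r)))
    (h0 : ∀ k, D k 0 ≤ 0)
    (hdiv : ¬ Summable (fun m : ℕ => (M (m+1)) ^ (-(1 / ((m:ℝ)+1))))) (k : ℕ) (x : ℝ) :
    D k x ≤ 0 := by
  have hmono : Monotone (fun k => M (k+1) / M k) := by
    apply monotone_nat_of_le_succ
    intro k
    rw [div_le_div_iff₀ (hM _) (hM _)]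
    nlinarith [hlc k]
  have hns := ratio_not_summable M hM hdiv
  have claim : ∀ p K : ℕ, ∀ x : ℝ,
      |x| ≤ ∑ i ∈ Finset.range p, Real.exp (-1) * (M (K+i) / M (K+i+1)) →
      ∀ k, D k x ≤ C * Real.exp (-(K:ℝ)) * Real.exp k * M k := by
    intro p
    induction p with
    | zero =>
      intro K x hx k
      have : x = 0 := by simpa using hx
      subst this
      have := hM k
      exact (h0 k).trans (by positivity)
    | succ p ih =>
      intro K x hx
      rw [Finset.sum_range_succ'] at hx
      set s := ∑ i ∈ Finset.range p, Real.exp (-1) * (M (K+(i+1)) / M (K+(i+1)+1)) with hs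
      have hs0 : 0 ≤ s := Finset.sum_nonneg fun i _ => by
        have := hM (K+(i+1)); have := hM (K+(i+1)+1); positivity
      have hd0 : 0 ≤ Real.exp (-1) * (M (K+0) / M (K+0+1)) := by
        have := hM (K+0); have := hM (K+0+1); positivity
      obtain ⟨y, hy1, hy2⟩ : ∃ y, |y| ≤ s ∧ |x - y| ≤ Real.exp (-1) * (M (K+0) / M (K+0+1)) := by
        rcases le_total |x| s with h | h
        · exact ⟨x, h, by simpa using hd0⟩
        · rcases le_total 0 x with h' | h'
          · refine ⟨s, by rw [abs_of_nonneg hs0], ?_⟩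
            rw [abs_of_nonneg h'] at h hx
            rw [abs_of_nonneg (by linarith)]; linarith
          · refine ⟨-s, by rw [abs_neg, abs_of_nonneg hs0], ?_⟩
            rw [abs_of_nonpos h'] at h hx
            rw [abs_of_nonpos (by linarith)]; linarith
      have h1 := ih (K+1) y (by
        convert hy1 using 1
        rw [hs]
        refine Finset.sum_congr rfl fun i _ => ?_
        rw [show K+1+i = K+(i+1) by ring])
      have h2 := bang_step D M C hC hM hmono hb ht K y (x-y) (by
        intro k; simpa using h1 k) hy2
      simpa using h2
  have all : ∀ K : ℕ, D k x ≤ C * Real.exp (-(K:ℝ)) * Real.exp k * M k := by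
    intro K
    have hns2 : ¬ Summable (fun i => Real.exp (-1) * (M (K+i) / M (K+i+1))) := by
      intro hs
      apply hns
      rw [summable_mul_left_iff (Real.exp_pos _).ne'] at hs
      rw [← summable_nat_add_iff K]
      refine hs.congr fun i => ?_
      rw [add_comm K i]
    rw [not_summable_iff_tendsto_nat_atTop_of_nonneg (fun i => by
      have := hM (K+i); have := hM (K+i+1); positivity)] at hns2
    obtain ⟨p, hp⟩ := (hns2.eventually_ge_atTop |x|).exists
    exact claim p K x hp k
  refine ge_of_tendsto' (f := fun K : ℕ => C * Real.exp (-(K:ℝ)) * Real.exp k * M k)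
    (x := Filter.atTop) ?_ all
  have : Filter.Tendsto (fun K : ℕ => Real.exp (-(K:ℝ))) Filter.atTop (nhds 0) :=
    Real.tendsto_exp_neg_atTop_nhds_zero.comp tendsto_natCast_atTop_atTop
  simpa using ((this.const_mul C).mul_const (Real.exp k)).mul_const (M k)

lemma exp_taylor_nonneg (r : ℕ) : ∀ x : ℝ, 0 ≤ x →
    ‖Complex.exp (Complex.I * x) - ∑ j ∈ Finset.range r, (Complex.I * x)^j / (j.factorial : ℂ)‖
      ≤ x^r / (r.factorial : ℝ) := by
  induction r with
  | zero => intro x hx; simp [Complex.norm_exp_I_mul_ofReal]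
  | succ r ih =>
    intro x hx
    have hd1 : ∀ y : ℝ, HasDerivAt (fun y : ℝ => Complex.I * (y:ℂ)) Complex.I y := fun y => by
      simpa using (Complex.ofRealCLM.hasDerivAt (x := y)).const_mul Complex.I
    have hd : ∀ y : ℝ, HasDerivAt (fun y : ℝ => Complex.exp (Complex.I * y)
        - ∑ j ∈ Finset.range (r+1), (Complex.I * y)^j / (j.factorial : ℂ))
        (Complex.I * (Complex.exp (Complex.I * y)
          - ∑ j ∈ Finset.range r, (Complex.I * y)^j / (j.factorial : ℂ))) y := by
      intro y
      have h2 : HasDerivAt (fun y : ℝ => ∑ j ∈ Finset.range (r+1),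
          (Complex.I * (y:ℂ))^j / (j.factorial : ℂ))
          (∑ j ∈ Finset.range (r+1), ((j:ℂ) * (Complex.I * (y:ℂ))^(j-1) * Complex.I)
            / (j.factorial : ℂ)) y :=
        HasDerivAt.fun_sum fun j _ => ((hd1 y).pow j).div_const _
      refine ((hd1 y).cexp.sub h2).congr_deriv (Eq.symm ?_)
      rw [Finset.sum_range_succ', mul_sub, Finset.mul_sum, mul_comm]
      simp only [Nat.cast_zero, zero_mul, zero_div, add_zero]
      congr 1
      refine Finset.sum_congr rfl fun j _ => ?_
      rw [Nat.factorial_succ, Nat.add_sub_cancel]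
      have : (j.factorial : ℂ) ≠ 0 := by exact_mod_cast j.factorial_ne_zero
      have h3 : ((j+1 : ℕ) : ℂ) ≠ 0 := by exact_mod_cast j.succ_ne_zero
      push_cast at h3 ⊢
      field_simp
    have hB : ∀ y : ℝ, HasDerivAt (fun y : ℝ => y^(r+1) / ((r+1).factorial : ℝ))
        (y^r / (r.factorial : ℝ)) y := by
      intro y
      refine ((hasDerivAt_pow (r+1) y).div_const ((r+1).factorial : ℝ)).congr_deriv (Eq.symm ?_)
      rw [Nat.factorial_succ, Nat.add_sub_cancel]
      push_cast
      field_simp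
    refine image_norm_le_of_norm_deriv_right_le_deriv_boundary (a := 0) (b := x)
      (fun y _ => (hd y).continuousAt.continuousWithinAt)
      (fun y _ => (hd y).hasDerivWithinAt) ?_ (fun y => hB y) ?_ (Set.right_mem_Icc.2 hx)
    · simp [Finset.sum_range_succ']
    · intro y hy
      rw [norm_mul, Complex.norm_I, one_mul]
      exact ih y hy.1

lemma exp_taylor (r : ℕ) (x : ℝ) :
    ‖Complex.exp (Complex.I * x) - ∑ j ∈ Finset.range r, (Complex.I * x)^j / (j.factorial : ℂ)‖
      ≤ |x|^r / (r.factorial : ℝ) := by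
  rcases le_total 0 x with h | h
  · rw [abs_of_nonneg h]; exact exp_taylor_nonneg r x h
  · rw [abs_of_nonpos h]
    refine le_trans (le_of_eq ?_) (exp_taylor_nonneg r (-x) (by linarith))
    rw [← Complex.norm_conj]
    congr 1
    simp [← Complex.exp_conj, map_sum]

section
variable {n : ℕ} (μ : Measure (EuclideanSpace ℝ (Fin n)))

/-- evaluation of a polynomial as a function -/
noncomputable def pev {n : ℕ} (P : MvPolynomial (Fin n) ℂ) (lam : EuclideanSpace ℝ (Fin n)) : ℂ :=
  MvPolynomial.eval (fun j => ((lam j : ℝ) : ℂ)) P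

/-- distance to the polynomials in `L¹` -/
noncomputable def pdist (f : EuclideanSpace ℝ (Fin n) → ℂ) : ℝ :=
  ⨅ P : MvPolynomial (Fin n) ℂ, ∫ lam, ‖f lam - pev P lam‖ ∂μ

lemma pdist_bdd (f : EuclideanSpace ℝ (Fin n) → ℂ) :
    BddBelow (Set.range fun P : MvPolynomial (Fin n) ℂ => ∫ lam, ‖f lam - pev P lam‖ ∂μ) :=
  ⟨0, by rintro _ ⟨P, rfl⟩; exact integral_nonneg fun _ => norm_nonneg _⟩

lemma pdist_nonneg (f : EuclideanSpace ℝ (Fin n) → ℂ) : 0 ≤ pdist μ f :=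
  Real.iInf_nonneg fun _ => integral_nonneg fun _ => norm_nonneg _

lemma pdist_le (f : EuclideanSpace ℝ (Fin n) → ℂ) (P : MvPolynomial (Fin n) ℂ) :
    pdist μ f ≤ ∫ lam, ‖f lam - pev P lam‖ ∂μ := ciInf_le (pdist_bdd μ f) P

lemma pdist_le_norm (f : EuclideanSpace ℝ (Fin n) → ℂ) : pdist μ f ≤ ∫ lam, ‖f lam‖ ∂μ := by
  simpa [pev] using pdist_le μ f 0

lemma pdist_pev (P : MvPolynomial (Fin n) ℂ) : pdist μ (pev P) ≤ 0 := by
  simpa using pdist_le μ (pev P) P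

lemma exists_of_pdist {f : EuclideanSpace ℝ (Fin n) → ℂ} {c : ℝ} (h : pdist μ f < c) :
    ∃ P : MvPolynomial (Fin n) ℂ, ∫ lam, ‖f lam - pev P lam‖ ∂μ < c := exists_lt_of_ciInf_lt h

lemma pdist_add (hpi : ∀ P : MvPolynomial (Fin n) ℂ, Integrable (pev P) μ)
    {f g : EuclideanSpace ℝ (Fin n) → ℂ} (hf : Integrable f μ) (hg : Integrable g μ) :
    pdist μ (fun x => f x + g x) ≤ pdist μ f + pdist μ g := by
  refine le_of_forall_pos_le_add fun ε hε => ?_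
  obtain ⟨P, hP⟩ := exists_of_pdist μ (show pdist μ f < pdist μ f + ε/2 by linarith)
  obtain ⟨Q, hQ⟩ := exists_of_pdist μ (show pdist μ g < pdist μ g + ε/2 by linarith)
  have h1 := (hf.sub (hpi P)).norm
  have h2 := (hg.sub (hpi Q)).norm
  calc _ ≤ ∫ lam, ‖f lam + g lam - pev (P+Q) lam‖ ∂μ := pdist_le μ _ (P+Q)
    _ ≤ ∫ lam, (‖f lam - pev P lam‖ + ‖g lam - pev Q lam‖) ∂μ := by
      refine integral_mono_of_nonneg (.of_forall fun _ => norm_nonneg _) (h1.add h2)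
        (.of_forall fun x => ?_)
      simp only [pev, map_add]
      rw [add_sub_add_comm]
      exact norm_add_le _ _
    _ = _ := integral_add h1 h2
    _ ≤ _ := by linarith

lemma pdist_smul (c : ℂ) (f : EuclideanSpace ℝ (Fin n) → ℂ) :
    pdist μ (fun x => c * f x) ≤ ‖c‖ * pdist μ f := by
  refine le_of_forall_pos_le_add fun ε hε => ?_
  have hc : 0 < ‖c‖ + 1 := by positivity
  obtain ⟨P, hP⟩ := exists_of_pdist μ (show pdist μ f < pdist μ f + ε/(‖c‖+1) by
    linarith [div_pos hε hc])
  calc _ ≤ ∫ lam, ‖c * f lam - pev (MvPolynomial.C c * P) lam‖ ∂μ := pdist_le μ _ _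
    _ = ‖c‖ * ∫ lam, ‖f lam - pev P lam‖ ∂μ := by
      rw [← integral_const_mul]
      congr 1; ext x
      simp only [pev, map_mul, MvPolynomial.eval_C]
      rw [← mul_sub, norm_mul]
    _ ≤ ‖c‖ * (pdist μ f + ε/(‖c‖+1)) := by gcongr
    _ ≤ _ := by
      rw [mul_add]
      gcongr
      rw [mul_div_assoc', div_le_iff₀ hc]
      nlinarith

lemma pdist_sum (hpi : ∀ P : MvPolynomial (Fin n) ℂ, Integrable (pev P) μ)
    {ι : Type*} (s : Finset ι) (f : ι → EuclideanSpace ℝ (Fin n) → ℂ)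
    (hf : ∀ i ∈ s, Integrable (f i) μ) :
    pdist μ (fun x => ∑ i ∈ s, f i x) ≤ ∑ i ∈ s, pdist μ (f i) := by
  classical
  induction s using Finset.induction_on with
  | empty =>
    have h : (pev (0 : MvPolynomial (Fin n) ℂ)) = fun _ => 0 := by ext; simp [pev]
    simpa [h] using pdist_pev μ (0 : MvPolynomial (Fin n) ℂ)
  | insert a s ha ih =>
    simp only [Finset.sum_insert ha]
    have h1 := fun i hi => hf i (Finset.mem_insert_of_mem hi)
    refine (pdist_add μ hpi (hf a (Finset.mem_insert_self a s))
      (integrable_finsetSum _ h1)).trans ?_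
    linarith [ih h1]
end

lemma cs_real {α : Type*} [MeasurableSpace α] (μ : Measure α) {f g : α → ℝ}
    (hf : MemLp f 2 μ) (hg : MemLp g 2 μ) :
    ∫ a, |f a| * |g a| ∂μ ≤ √(∫ a, f a ^ 2 ∂μ) * √(∫ a, g a ^ 2 ∂μ) := by
  have h := integral_mul_le_Lp_mul_Lq_of_nonneg (μ := μ) (Real.HolderConjugate.two_two)
    (f := fun a => |f a|) (g := fun a => |g a|) (.of_forall fun _ => abs_nonneg _)
    (.of_forall fun _ => abs_nonneg _) (by rw [ENNReal.ofReal_ofNat]; exact hf.abs) (by rw [ENNReal.ofReal_ofNat]; exact hg.abs)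
  simpa [Real.sqrt_eq_rpow] using h


lemma trig_orth {n : ℕ} (μ : Measure (EuclideanSpace ℝ (Fin n))) [IsFiniteMeasure μ]
    (g : EuclideanSpace ℝ (Fin n) → ℝ) (hg : Integrable g μ)
    (h : ∀ t : EuclideanSpace ℝ (Fin n),
      ∫ x, Complex.exp ((inner ℝ x t : ℝ) * Complex.I) * (g x : ℂ) ∂μ = 0) :
    g =ᵐ[μ] 0 := by
  wlog hm : Measurable g generalizing g
  · have hae : g =ᵐ[μ] hg.1.mk g := hg.1.ae_eq_mk
    refine hae.trans (this (hg.1.mk g) (hg.congr hae) (fun t => ?_) hg.1.stronglyMeasurable_mk.measurable)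
    rw [← h t]
    refine integral_congr_ae ?_
    filter_upwards [hae] with x hx
    rw [hx]
  have hfp : IsFiniteMeasure (μ.withDensity fun x => ENNReal.ofReal (g x)) :=
    isFiniteMeasure_withDensity_ofReal hg.2
  have hfm : IsFiniteMeasure (μ.withDensity fun x => ENNReal.ofReal (-g x)) :=
    isFiniteMeasure_withDensity_ofReal hg.neg.2
  have hb : ∀ (t : EuclideanSpace ℝ (Fin n)) (u : EuclideanSpace ℝ (Fin n) → ℝ), Integrable u μ →
      Integrable (fun x => Complex.exp ((inner ℝ x t : ℝ) * Complex.I) * (u x : ℂ)) μ := by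
    intro t u hu
    refine (hu.ofReal (𝕜 := ℂ)).bdd_mul (c := 1) (by fun_prop) (.of_forall fun x => ?_)
    rw [Complex.norm_exp_ofReal_mul_I]
  have heq : (μ.withDensity fun x => ENNReal.ofReal (g x))
      = (μ.withDensity fun x => ENNReal.ofReal (-g x)) := by
    apply Measure.ext_of_charFun
    ext t
    rw [charFun_apply, charFun_apply,
      integral_withDensity_eq_integral_toReal_smul (by fun_prop) (by simp),
      integral_withDensity_eq_integral_toReal_smul (by fun_prop) (by simp), ← sub_eq_zero,
      ← h t]
    have e : ∀ u : ℝ, (ENNReal.ofReal u).toReal = max u 0 := fun u => ENNReal.toReal_ofReal'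
    simp only [e]
    have i1 := hb t _ hg.pos_part
    have i2 := hb t _ hg.neg_part
    rw [← integral_sub]
    · congr 1; ext x
      rcases le_total 0 (g x) with hx | hx
      · rw [max_eq_left hx, max_eq_right (by linarith)]; simp [mul_comm]
      · rw [max_eq_right hx, max_eq_left (by linarith)]; simp [mul_comm]
    · refine i1.congr (.of_forall fun x => ?_)
      simp [mul_comm]
    · refine i2.congr (.of_forall fun x => ?_)
      simp [mul_comm]
  have := (withDensity_eq_iff_of_sigmaFinite (by fun_prop) (by fun_prop)).1 heq
  filter_upwards [this] with x hx
  rcases le_total 0 (g x) with h' | h'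
  · rw [ENNReal.ofReal_of_nonpos (p := -g x) (by linarith), ENNReal.ofReal_eq_zero] at hx
    exact le_antisymm hx h'
  · rw [ENNReal.ofReal_of_nonpos (p := g x) h', eq_comm, ENNReal.ofReal_eq_zero] at hx
    exact le_antisymm h' (neg_nonpos.1 hx)

lemma trig_orth_complex {n : ℕ} (μ : Measure (EuclideanSpace ℝ (Fin n))) [IsFiniteMeasure μ]
    (g : EuclideanSpace ℝ (Fin n) → ℂ) (hg : Integrable g μ)
    (h : ∀ t : EuclideanSpace ℝ (Fin n),
      ∫ x, Complex.exp ((inner ℝ x t : ℝ) * Complex.I) * g x ∂μ = 0) :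
    g =ᵐ[μ] 0 := by
  have h' : ∀ t : EuclideanSpace ℝ (Fin n),
      ∫ x, Complex.exp ((inner ℝ x t : ℝ) * Complex.I) * (starRingEnd ℂ) (g x) ∂μ = 0 := by
    intro t
    have := congrArg (starRingEnd ℂ) (h (-t))
    rw [← integral_conj, map_zero] at this
    rw [← this]
    congr 1; ext x
    simp [← Complex.exp_conj]
  have hcg : Integrable (fun x => (starRingEnd ℂ) (g x)) μ := by
    refine (Complex.conjCLE.toContinuousLinearMap.integrable_comp hg)
  have hb : ∀ (t : EuclideanSpace ℝ (Fin n)) (u : EuclideanSpace ℝ (Fin n) → ℂ), Integrable u μ →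
      Integrable (fun x => Complex.exp ((inner ℝ x t : ℝ) * Complex.I) * u x) μ := by
    intro t u hu
    refine hu.bdd_mul (c := 1) (by fun_prop) (.of_forall fun x => ?_)
    rw [Complex.norm_exp_ofReal_mul_I]
  have hre := trig_orth μ (fun x => (g x).re) hg.re (fun t => by
    have e : ∀ x, Complex.exp ((inner ℝ x t : ℝ) * Complex.I) * (((g x).re : ℝ) : ℂ)
      = (1/2 : ℂ) * (Complex.exp ((inner ℝ x t : ℝ) * Complex.I) * g x
        + Complex.exp ((inner ℝ x t : ℝ) * Complex.I) * (starRingEnd ℂ) (g x)) := fun x => by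
      rw [Complex.re_eq_add_conj]; ring
    simp_rw [e]
    rw [integral_const_mul, integral_add (hb t _ hg) (hb t _ hcg), h, h']; simp)
  have him := trig_orth μ (fun x => (g x).im) hg.im (fun t => by
    have e : ∀ x, Complex.exp ((inner ℝ x t : ℝ) * Complex.I) * (((g x).im : ℝ) : ℂ)
      = (1/(2*Complex.I) : ℂ) * (Complex.exp ((inner ℝ x t : ℝ) * Complex.I) * g x
        - Complex.exp ((inner ℝ x t : ℝ) * Complex.I) * (starRingEnd ℂ) (g x)) := fun x => by
      rw [Complex.im_eq_sub_conj]; ring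
    simp_rw [e]
    rw [integral_const_mul, integral_sub (hb t _ hg) (hb t _ hcg), h, h']; simp)
  filter_upwards [hre, him] with x h1 h2
  exact Complex.ext h1 h2

/-- the exponential with frequency `t` -/
noncomputable def expf {n : ℕ} (t x : EuclideanSpace ℝ (Fin n)) : ℂ :=
  Complex.exp ((inner ℝ x t : ℝ) * Complex.I)

lemma expf_cont {n : ℕ} (t : EuclideanSpace ℝ (Fin n)) : Continuous (expf t) := by
  unfold expf; fun_prop

lemma expf_norm {n : ℕ} (t x : EuclideanSpace ℝ (Fin n)) : ‖expf t x‖ = 1 :=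
  Complex.norm_exp_ofReal_mul_I _

lemma expf_memLp {n : ℕ} (μ : Measure (EuclideanSpace ℝ (Fin n))) [IsFiniteMeasure μ]
    (p : ENNReal) (t : EuclideanSpace ℝ (Fin n)) : MemLp (expf t) p μ :=
  MemLp.of_bound (expf_cont t).aestronglyMeasurable 1 (.of_forall fun x => (expf_norm t x).le)

lemma trig_dense_L2 {n : ℕ} (μ : Measure (EuclideanSpace ℝ (Fin n))) [IsFiniteMeasure μ] :
    (Submodule.span ℂ (Set.range fun t => (expf_memLp μ 2 t).toLp)).topologicalClosure = ⊤ := by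
  rw [Submodule.topologicalClosure_eq_top_iff, Submodule.eq_bot_iff]
  intro g hg
  rw [Submodule.mem_orthogonal] at hg
  have hgi : Integrable g μ := (Lp.memLp g).integrable (by norm_num)
  have := trig_orth_complex μ g hgi (fun t => by
    have h := hg _ (Submodule.subset_span ⟨-t, rfl⟩)
    rw [L2.inner_def] at h
    rw [← h]
    refine integral_congr_ae ?_
    filter_upwards [(expf_memLp μ 2 (-t)).coeFn_toLp] with x hx
    rw [hx, RCLike.inner_apply]
    simp [expf, ← Complex.exp_conj, mul_comm])
  exact (Lp.eq_zero_iff_ae_eq_zero).2 this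

lemma trig_dense_L1 {n : ℕ} (μ : Measure (EuclideanSpace ℝ (Fin n))) [IsFiniteMeasure μ]
    (f : EuclideanSpace ℝ (Fin n) → ℂ) (hf : Integrable f μ) (ε : ℝ) (hε : 0 < ε) :
    ∃ c : EuclideanSpace ℝ (Fin n) →₀ ℂ,
      ∫ x, ‖f x - ∑ t ∈ c.support, c t * expf t x‖ ∂μ < ε := by
  obtain ⟨b, hb1, hb2⟩ := hf.exists_boundedContinuous_integral_sub_le (half_pos hε)
  have hbm : MemLp b 2 μ := MemLp.of_bound b.continuous.aestronglyMeasurable ‖b‖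
    (.of_forall fun x => b.norm_coe_le_norm x)
  set K := √(μ.real Set.univ) + 1 with hK
  have hK0 : 0 < K := by positivity
  have hmem : hbm.toLp ∈ closure ((Submodule.span ℂ
      (Set.range fun t => (expf_memLp μ 2 t).toLp) : Submodule ℂ (Lp ℂ 2 μ)) : Set (Lp ℂ 2 μ)) := by
    rw [← Submodule.topologicalClosure_coe, trig_dense_L2 μ]; trivial
  obtain ⟨T, hT, hd⟩ := Metric.mem_closure_iff.1 hmem (ε / (2 * K)) (by positivity)
  obtain ⟨c, rfl⟩ := (Finsupp.mem_span_range_iff_exists_finsupp).1 hT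
  refine ⟨c, ?_⟩
  set S : EuclideanSpace ℝ (Fin n) → ℂ := fun x => ∑ t ∈ c.support, c t * expf t x with hS
  have hSm : MemLp S 2 μ := memLp_finsetSum _ fun t _ => (expf_memLp μ 2 t).const_mul (c t)
  have hSeq : (c.sum fun t a => a • (expf_memLp μ 2 t).toLp) = hSm.toLp := by
    apply Lp.ext
    rw [Finsupp.sum]
    refine (Lp.coeFn_finsetSum _ _).trans ?_
    have h1 : ∀ᵐ x ∂μ, ∀ t ∈ c.support,
        (c t • (expf_memLp μ 2 t).toLp : Lp ℂ 2 μ) x = c t * expf t x := by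
      rw [Filter.eventually_all_finset]
      intro t _
      filter_upwards [Lp.coeFn_smul (c t) (expf_memLp μ 2 t).toLp,
        (expf_memLp μ 2 t).coeFn_toLp] with x hx1 hx2
      rw [hx1, Pi.smul_apply, hx2, smul_eq_mul]
    filter_upwards [h1, hSm.coeFn_toLp] with x hx1 hx2
    rw [hx2, Finset.sum_apply]
    exact Finset.sum_congr rfl hx1
  rw [hSeq, dist_eq_norm, ← MemLp.toLp_sub, Lp.norm_toLp] at hd
  have hd1 : MemLp (⇑b - S) 2 μ := hbm.sub hSm
  have hL : ∫ x, ‖b x - S x‖ ∂μ ≤ √(μ.real Set.univ) * (ε / (2*K)) := by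
    have h1 := cs_real μ (f := fun _ => 1) (g := fun x => ‖(⇑b - S) x‖)
      (memLp_const 1) hd1.norm
    rw [hd1.eLpNorm_eq_integral_rpow_norm (by norm_num) (by norm_num),
      ENNReal.toReal_ofReal (Real.rpow_nonneg (integral_nonneg fun _ => by positivity) _)] at hd
    simp at hd h1
    refine h1.trans ?_
    gcongr
    simpa [Real.sqrt_eq_rpow] using hd.le
  have hSi : Integrable S μ := hSm.integrable (by norm_num)
  calc ∫ x, ‖f x - S x‖ ∂μ ≤ ∫ x, (‖f x - b x‖ + ‖b x - S x‖) ∂μ := by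
        refine integral_mono_of_nonneg (.of_forall fun _ => norm_nonneg _)
          ((hf.sub hb2).norm.add (hb2.sub hSi).norm) (.of_forall fun x => ?_)
        exact norm_sub_le_norm_sub_add_norm_sub _ _ _
    _ = ∫ x, ‖f x - b x‖ ∂μ + ∫ x, ‖b x - S x‖ ∂μ :=
        integral_add (hf.sub hb2).norm (hb2.sub hSi).norm
    _ ≤ ε/2 + √(μ.real Set.univ) * (ε / (2*K)) := add_le_add hb1 hL
    _ < ε/2 + K * (ε / (2*K)) := by
      have : 0 < ε / (2*K) := by positivity
      rw [hK] at this ⊢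
      nlinarith
    _ = ε := by field_simp; norm_num

/-- membership in all `L^p`, `p` finite -/
def AllLp {n : ℕ} (μ : Measure (EuclideanSpace ℝ (Fin n)))
    (f : EuclideanSpace ℝ (Fin n) → ℂ) : Prop := ∀ p : ENNReal, p ≠ ⊤ → MemLp f p μ

lemma AllLp.mul {n : ℕ} {μ : Measure (EuclideanSpace ℝ (Fin n))}
    {f g : EuclideanSpace ℝ (Fin n) → ℂ} (hf : AllLp μ f) (hg : AllLp μ g) :
    AllLp μ (fun x => f x * g x) := by
  intro p hp
  have hp2 : 2 * p ≠ ⊤ := ENNReal.mul_ne_top (by norm_num) hp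
  have : ENNReal.HolderTriple (2*p) (2*p) p := ⟨by
    rw [ENNReal.mul_inv (by simp) (by simp), ← add_mul, ENNReal.inv_two_add_inv_two, one_mul]⟩
  exact (hg _ hp2).mul (hf _ hp2)

lemma AllLp.coord {n : ℕ} {μ : Measure (EuclideanSpace ℝ (Fin n))} [IsFiniteMeasure μ] (j : Fin n)
    (hmom : ∀ m : ℕ, 1 ≤ m → Integrable (fun lam : EuclideanSpace ℝ (Fin n) => |lam j| ^ m) μ) :
    AllLp μ (fun lam => ((lam j : ℝ) : ℂ)) := by
  intro p hp
  obtain ⟨m, hm⟩ := ENNReal.exists_nat_gt hp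
  have hm0 : m ≠ 0 := by rintro rfl; simp at hm
  have hmeas : AEStronglyMeasurable
      (fun lam : EuclideanSpace ℝ (Fin n) => ((lam j : ℝ) : ℂ)) μ := by
    apply Continuous.aestronglyMeasurable; fun_prop
  have : MemLp (fun lam : EuclideanSpace ℝ (Fin n) => ((lam j : ℝ) : ℂ)) m μ := by
    rw [← integrable_norm_rpow_iff hmeas (by exact_mod_cast hm0) (by simp)]
    simpa using hmom m (Nat.one_le_iff_ne_zero.2 hm0)
  exact this.mono_exponent hm.le

lemma AllLp.const {n : ℕ} {μ : Measure (EuclideanSpace ℝ (Fin n))} [IsFiniteMeasure μ] (c : ℂ) :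
    AllLp μ (fun _ => c) := fun _ _ => memLp_const c

lemma AllLp.pow {n : ℕ} {μ : Measure (EuclideanSpace ℝ (Fin n))} [IsFiniteMeasure μ]
    {f : EuclideanSpace ℝ (Fin n) → ℂ} (hf : AllLp μ f) (k : ℕ) :
    AllLp μ (fun x => f x ^ k) := by
  induction k with
  | zero => simpa using AllLp.const 1
  | succ k ih => simpa only [pow_succ] using ih.mul hf

lemma AllLp.pev {n : ℕ} {μ : Measure (EuclideanSpace ℝ (Fin n))} [IsFiniteMeasure μ]
    (hmom : ∀ m : ℕ, 1 ≤ m → ∀ j : Fin n,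
      Integrable (fun lam : EuclideanSpace ℝ (Fin n) => |lam j| ^ m) μ)
    (P : MvPolynomial (Fin n) ℂ) : AllLp μ (pev P) := by
  induction P using MvPolynomial.induction_on with
  | C a =>
    have : _root_.pev (MvPolynomial.C a : MvPolynomial (Fin n) ℂ) = fun _ => a := by
      ext; simp [_root_.pev]
    rw [this]; exact AllLp.const a
  | add p q hp hq =>
    intro r hr
    have : _root_.pev (p + q) = _root_.pev p + _root_.pev q := by ext; simp [_root_.pev]
    rw [this]; exact (hp r hr).add (hq r hr)
  | mul_X p j hp =>
    have : _root_.pev (p * MvPolynomial.X j) = fun x => _root_.pev p x * ((x j : ℝ) : ℂ) := by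
      ext; simp [_root_.pev]
    rw [this]; exact hp.mul (AllLp.coord j fun m hm => hmom m hm j)

lemma S_pos {n : ℕ} {μ : Measure (EuclideanSpace ℝ (Fin n))} [IsFiniteMeasure μ] (j : Fin n)
    (hmom : ∀ m : ℕ, 1 ≤ m → Integrable (fun lam : EuclideanSpace ℝ (Fin n) => |lam j| ^ m) μ)
    (hcarleman : ¬ Summable (fun m : ℕ =>
      (∫ lam : EuclideanSpace ℝ (Fin n), |lam j| ^ (2 * (m + 1)) ∂μ)
        ^ (-(1 / (2 * ((m : ℝ) + 1)))))) (k : ℕ) :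
    0 < ∫ lam : EuclideanSpace ℝ (Fin n), |lam j| ^ (2 * k) ∂μ := by
  have h0 : 0 ≤ ∫ lam : EuclideanSpace ℝ (Fin n), |lam j| ^ (2 * k) ∂μ :=
    integral_nonneg fun _ => by positivity
  refine lt_of_le_of_ne h0 fun h => hcarleman ?_
  have hint : Integrable (fun lam : EuclideanSpace ℝ (Fin n) => |lam j| ^ (2*k)) μ := by
    rcases Nat.eq_zero_or_pos k with rfl | hk
    · simp
    · exact hmom _ (by omega)
  have hae := (integral_eq_zero_iff_of_nonneg (fun _ => by positivity) hint).1 h.symm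
  have hz : ∀ m : ℕ, ∫ lam : EuclideanSpace ℝ (Fin n), |lam j| ^ (2 * (m + 1)) ∂μ = 0 := by
    intro m
    refine integral_eq_zero_of_ae ?_
    filter_upwards [hae] with x hx
    have h1 : |x j| = 0 := by
      have hx' : |x j| ^ (2*k) = 0 := hx
      exact eq_zero_of_pow_eq_zero hx'
    simp [h1]
  have : (fun m : ℕ => (∫ lam : EuclideanSpace ℝ (Fin n), |lam j| ^ (2 * (m + 1)) ∂μ)
        ^ (-(1 / (2 * ((m : ℝ) + 1))))) = fun _ => 0 := by
    ext m
    rw [hz, Real.zero_rpow]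
    have : (0:ℝ) < 1 / (2 * ((m : ℝ) + 1)) := by positivity
    linarith
  rw [this]; exact summable_zero

lemma one_step {n : ℕ} {μ : Measure (EuclideanSpace ℝ (Fin n))} [IsFiniteMeasure μ]
    (hmom : ∀ m : ℕ, 1 ≤ m → ∀ j : Fin n,
      Integrable (fun lam : EuclideanSpace ℝ (Fin n) => |lam j| ^ m) μ)
    (j : Fin n)
    (hcarleman : ¬ Summable (fun m : ℕ =>
      (∫ lam : EuclideanSpace ℝ (Fin n), |lam j| ^ (2 * (m + 1)) ∂μ)
        ^ (-(1 / (2 * ((m : ℝ) + 1))))))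
    (u : EuclideanSpace ℝ (Fin n) → ℂ) (hu : AllLp μ u)
    (h0 : ∀ k : ℕ, pdist μ (fun x => (Complex.I * (x j : ℝ))^k * u x) ≤ 0) (t : ℝ) :
    pdist μ (fun x => u x * Complex.exp (Complex.I * ((t * x j : ℝ) : ℂ))) ≤ 0 := by
  have hpi : ∀ P : MvPolynomial (Fin n) ℂ, Integrable (pev P) μ := fun P =>
    memLp_one_iff_integrable.1 (AllLp.pev hmom P 1 (by simp))
  have hco : AllLp μ (fun lam => ((lam j : ℝ) : ℂ)) := AllLp.coord j fun m hm => hmom m hm j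
  set F : ℕ → ℝ → EuclideanSpace ℝ (Fin n) → ℂ := fun k t x =>
    (Complex.I * (x j : ℝ))^k * u x * Complex.exp (Complex.I * ((t * x j : ℝ) : ℂ)) with hF
  set S : ℕ → ℝ := fun k => ∫ lam : EuclideanSpace ℝ (Fin n), |lam j| ^ (2 * k) ∂μ with hS
  have hSpos : ∀ k, 0 < S k := S_pos j (fun m hm => hmom m hm j) hcarleman
  set C : ℝ := √(∫ x, ‖u x‖^2 ∂μ) with hC
  have hmem : ∀ k : ℕ, MemLp (fun x : EuclideanSpace ℝ (Fin n) => |x j|^k) 2 μ := fun k => by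
    have := (hco.pow k 2 (by norm_num)).norm
    simpa using this
  have hEL : ∀ t : ℝ, AllLp μ (fun x => Complex.exp (Complex.I * ((t * x j : ℝ) : ℂ))) :=
    fun t p _ => MemLp.of_bound (by
      apply Continuous.aestronglyMeasurable; fun_prop) 1
      (.of_forall fun x => (Complex.norm_exp_I_mul_ofReal _).le)
  have hFL : ∀ k t, AllLp μ (F k t) := fun k t =>
    ((((AllLp.const Complex.I).mul hco).pow k).mul hu).mul (hEL t)
  have hFi : ∀ k t, Integrable (F k t) μ := fun k t =>
    memLp_one_iff_integrable.1 (hFL k t 1 (by simp))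
  have hint : ∀ k : ℕ, Integrable (fun x => |x j|^k * ‖u x‖) μ := fun k =>
    (hmem k).integrable_mul (hu 2 (by norm_num)).norm
  have hcs : ∀ k : ℕ, ∫ x, |x j|^k * ‖u x‖ ∂μ ≤ C * √(S k) := by
    intro k
    have := cs_real μ (hmem k) (hu 2 (by norm_num)).norm
    simp only [abs_norm, abs_pow, abs_abs, ← pow_mul] at this
    rw [mul_comm C, hS, hC]
    simpa only [mul_comm k 2] using this
  have main := bang (fun k t => pdist μ (F k t)) (fun k => √(S k)) C (Real.sqrt_nonneg _)
    (fun k => Real.sqrt_pos.2 (hSpos k)) ?_ ?_ ?_ ?_ ?_ 0 t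
  · simpa [hF] using main
  · intro k
    rw [Real.sq_sqrt (hSpos _).le]
    have := cs_real μ (hmem k) (hmem (k+2))
    simp only [abs_pow, abs_abs, ← pow_mul, ← pow_add] at this
    simpa only [hS, mul_comm k 2, mul_comm (k+2) 2, show k + (k+2) = 2 * (k+1) by ring] using this
  · intro k t
    refine (pdist_le_norm μ _).trans (le_trans (le_of_eq ?_) (hcs k))
    congr 1; ext x
    simp [hF, Complex.norm_exp]
  · intro k r x h
    set R : EuclideanSpace ℝ (Fin n) → ℂ := fun y => (Complex.I * (y j : ℝ))^k * u y
      * Complex.exp (Complex.I * ((x * y j : ℝ) : ℂ))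
      * (Complex.exp (Complex.I * ((h * y j : ℝ) : ℂ))
        - ∑ i ∈ Finset.range r, (Complex.I * ((h * y j : ℝ) : ℂ))^i / (i.factorial : ℂ)) with hR
    have hdec : F k (x+h) = fun y => (∑ i ∈ Finset.range r,
        ((h:ℂ)^i / (i.factorial : ℂ)) * F (k+i) x y) + R y := by
      ext y
      have e : ∀ i, ((h:ℂ)^i / (i.factorial : ℂ)) * F (k+i) x y
          = (Complex.I * (y j : ℝ))^k * u y * Complex.exp (Complex.I * ((x * y j : ℝ) : ℂ))
            * ((Complex.I * ((h * y j : ℝ) : ℂ))^i / (i.factorial : ℂ)) := fun i => by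
        simp only [hF]; push_cast; ring
      rw [Finset.sum_congr rfl fun i _ => e i, ← Finset.mul_sum]
      simp only [hR, hF]
      rw [mul_sub, add_sub_cancel, mul_assoc _ (Complex.exp _) (Complex.exp _), ← Complex.exp_add]
      congr 2; push_cast; ring
    have hsi : Integrable (fun y => ∑ i ∈ Finset.range r,
        ((h:ℂ)^i / (i.factorial : ℂ)) * F (k+i) x y) μ :=
      integrable_finsetSum _ fun i _ => (hFi (k+i) x).const_mul _
    have hRi : Integrable R μ := by
      have : R = fun y => F k (x+h) y - ∑ i ∈ Finset.range r,
        ((h:ℂ)^i / (i.factorial : ℂ)) * F (k+i) x y := by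
        ext y; rw [hdec]; ring
      rw [this]; exact (hFi _ _).sub hsi
    have hRb : ∫ y, ‖R y‖ ∂μ ≤ |h|^r / (r.factorial : ℝ) * (C * √(S (k+r))) := by
      calc ∫ y, ‖R y‖ ∂μ ≤ ∫ y, |h|^r / (r.factorial : ℝ) * (|y j|^(k+r) * ‖u y‖) ∂μ := by
            refine integral_mono_of_nonneg (.of_forall fun _ => norm_nonneg _)
              ((hint (k+r)).const_mul _) (.of_forall fun y => ?_)
            have hb := exp_taylor r (h * y j)
            simp only [hR]
            rw [norm_mul, norm_mul, norm_mul, Complex.norm_exp_I_mul_ofReal, norm_pow, norm_mul,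
              Complex.norm_I, Complex.norm_real, one_mul, mul_one, Real.norm_eq_abs]
            calc |y j|^k * ‖u y‖ * _ ≤ |y j|^k * ‖u y‖ * (|h * y j|^r / (r.factorial : ℝ)) := by
                  gcongr
              _ = _ := by rw [abs_mul]; ring
        _ = |h|^r / (r.factorial : ℝ) * ∫ y, (|y j|^(k+r) * ‖u y‖) ∂μ := integral_const_mul _ _
        _ ≤ _ := by gcongr; exact hcs _
    show pdist μ (F k (x+h)) ≤ _
    rw [hdec]
    refine (pdist_add μ hpi hsi hRi).trans (add_le_add ?_ ((pdist_le_norm μ R).trans hRb))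
    refine (pdist_sum μ hpi _ _ fun i _ => (hFi (k+i) x).const_mul _).trans
      (Finset.sum_le_sum fun i _ => (pdist_smul μ _ _).trans (le_of_eq ?_))
    simp
  · intro k
    simpa [hF] using h0 k
  · intro hs
    apply hcarleman
    refine hs.congr fun m => ?_
    rw [Real.sqrt_eq_rpow, ← Real.rpow_mul (hSpos _).le]
    congr 1
    field_simp

lemma all_steps {n : ℕ} {μ : Measure (EuclideanSpace ℝ (Fin n))} [IsFiniteMeasure μ]
    (hmom : ∀ m : ℕ, 1 ≤ m → ∀ j : Fin n,
      Integrable (fun lam : EuclideanSpace ℝ (Fin n) => |lam j| ^ m) μ)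
    (hcarleman : ∀ j : Fin n, ¬ Summable (fun m : ℕ =>
      (∫ lam : EuclideanSpace ℝ (Fin n), |lam j| ^ (2 * (m + 1)) ∂μ)
        ^ (-(1 / (2 * ((m : ℝ) + 1))))))
    (t : EuclideanSpace ℝ (Fin n)) (s : Finset (Fin n)) :
    ∀ P : MvPolynomial (Fin n) ℂ,
      pdist μ (fun x => pev P x * Complex.exp (Complex.I * ((∑ j ∈ s, t j * x j : ℝ) : ℂ))) ≤ 0 := by
  induction s using Finset.induction_on with
  | empty => intro P; simpa using pdist_pev μ P
  | insert a s ha ih =>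
    intro P
    have hE : AllLp μ (fun x => Complex.exp (Complex.I * ((∑ j ∈ s, t j * x j : ℝ) : ℂ))) :=
      fun p _ => MemLp.of_bound (by
        apply Continuous.aestronglyMeasurable; fun_prop) 1
        (.of_forall fun x => (Complex.norm_exp_I_mul_ofReal _).le)
    have := one_step hmom a (hcarleman a) _ ((AllLp.pev hmom P).mul hE) (fun k => by
      have h := ih ((MvPolynomial.C Complex.I * MvPolynomial.X a)^k * P)
      simpa [pev, mul_assoc] using h) (t a)
    convert this using 3 with x
    rw [Finset.sum_insert ha, mul_assoc, ← Complex.exp_add]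
    congr 2
    push_cast; ring

/-- **de Jeu's multidimensional Carleman theorem.** Let `μ` be a finite Borel
measure on `ℝⁿ` with all absolute moments `S_j(m) = ∫ |λ_j|^m dμ` finite.  If for
each coordinate `j` the even moments satisfy Carleman's condition
`∑_{m≥1} S_j(2m)^{-1/(2m)} = ∞`, then the polynomial functions are dense in
`L¹(ℝⁿ, μ)`. -/
theorem carleman_polynomials_dense_L1 (n : ℕ)
    (μ : Measure (EuclideanSpace ℝ (Fin n))) [IsFiniteMeasure μ]
    (hmom : ∀ m : ℕ, 1 ≤ m → ∀ j : Fin n,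
      Integrable (fun lam : EuclideanSpace ℝ (Fin n) => |lam j| ^ m) μ)
    (hcarleman : ∀ j : Fin n, ¬ Summable (fun m : ℕ =>
      (∫ lam : EuclideanSpace ℝ (Fin n), |lam j| ^ (2 * (m + 1)) ∂μ)
        ^ (-(1 / (2 * ((m : ℝ) + 1)))))) :
    ∀ f : EuclideanSpace ℝ (Fin n) → ℂ, Integrable f μ →
      ∀ ε : ℝ, 0 < ε → ∃ P : MvPolynomial (Fin n) ℂ,
        ∫ lam : EuclideanSpace ℝ (Fin n),
          ‖f lam - MvPolynomial.eval (fun j => ((lam j : ℝ) : ℂ)) P‖ ∂μ < ε := by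
  intro f hf ε hε
  have hpi : ∀ P : MvPolynomial (Fin n) ℂ, Integrable (pev P) μ := fun P =>
    memLp_one_iff_integrable.1 (AllLp.pev hmom P 1 (by simp))
  obtain ⟨c, hc⟩ := trig_dense_L1 μ f hf ε hε
  have hexp : ∀ t, pdist μ (expf t) ≤ 0 := fun t => by
    have h := all_steps hmom hcarleman t Finset.univ 1
    convert h using 2 with x
    ext x
    simp [pev, expf, PiLp.inner_apply, mul_comm]
  have hi : ∀ t ∈ c.support, Integrable (fun x => c t * expf t x) μ := fun t _ =>
    (memLp_one_iff_integrable.1 (expf_memLp μ 1 t)).const_mul _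
  have hsi : Integrable (fun x => ∑ t ∈ c.support, c t * expf t x) μ := integrable_finsetSum _ hi
  have hT : pdist μ (fun x => ∑ t ∈ c.support, c t * expf t x) ≤ 0 := by
    refine (pdist_sum μ hpi _ _ hi).trans (Finset.sum_nonpos fun t _ => ?_)
    exact (pdist_smul μ _ _).trans (mul_nonpos_of_nonneg_of_nonpos (norm_nonneg _) (hexp t))
  have hlt : pdist μ f < ε := by
    have h1 := pdist_add μ hpi hsi (hf.sub hsi)
    have h2 := pdist_le_norm μ (fun x => f x - ∑ t ∈ c.support, c t * expf t x)
    have h3 : (fun x => (∑ t ∈ c.support, c t * expf t x)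
        + (f - fun x => ∑ t ∈ c.support, c t * expf t x) x) = f := by
      ext x; simp
    rw [h3] at h1
    have h4 : pdist μ (f - fun x => ∑ t ∈ c.support, c t * expf t x) < ε := h2.trans_lt hc
    linarith
  exact exists_of_pdist μ hlt
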